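/- arXiv:2406.18325 — 2 statements merged into one kernel-verified Lean document; each statement's English description precedes it below -/
import Mathlib

section
/- Let c₁, c₂ ∈ 𝔽_p and let N(c₁,c₂) = #{(a,b) ∈ 𝔽_q × 𝔽_q : Tr(a²) = c₁ and Tr(b²) = c₂}. If m is odd, then (as complex numbers) N(c₁,c₂) = p^{2m−2} if c₁ = 0 and c₂ = 0; N(c₁,c₂) = p^{2m−2} + p^{m−2}·η̄(−c₁)·G·Ḡ if c₁ ≠ 0 and c₂ = 0; N(c₁,c₂) = p^{2m−2} + p^{m−2}·η̄(−c₂)·G·Ḡ if c₁ = 0 and c₂ ≠ 0; and N(c₁,c₂) = p^{2m−2} + p^{m−2}(η̄(−c₁)+η̄(−c₂))·G·Ḡ + p^{−2}·η̄(c₁c₂)·G²·Ḡ² if c₁ ≠ 0 and c₂ ≠ 0. -/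
/-! The two conditions are independent, so the count is a product of two counts of the same shape,
`#{a | Tr (a ^ 2) = c}`. Detecting the condition `Tr (a ^ 2) = c` by the additive characters
`x ↦ χ̄₁ (y * x)` of the prime field turns such a count into a sum over `y` of quadratic exponential
sums `∑ a, χ₁ (y * a ^ 2)`. The one with `y = 0` equals `q`, the others equal `η y * G`. Since the
degree is odd, `η` agrees with `η̄` on the prime field, so summing `η y * χ̄₁ (-c * y)` over `y`
gives `η̄ (-c) * Ḡ`. -/

open Finset
open scoped Classical

noncomputable section

/-- `ζ_p = exp(2πi/p)`. -/
def zeta (p : ℕ) : ℂ := Complex.exp (2 * Real.pi * Complex.I / p)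

/-- The canonical additive character of `ℤ/p`: `χ̄₁(c) = ζ_p^c`. -/
def chiBar (p : ℕ) (c : ZMod p) : ℂ := zeta p ^ c.val

/-- The quadratic character of `(ℤ/p)^*`, extended by `η̄(0) = 0`. -/
def etaBar (p : ℕ) (c : ZMod p) : ℂ :=
  if c = 0 then 0 else if IsSquare c then 1 else -1

/-- The quadratic character of `F^*`, extended by `η(0) = 0`. -/
def etaQ (F : Type) [Field F] (x : F) : ℂ :=
  if x = 0 then 0 else if IsSquare x then 1 else -1

/-- The absolute trace map from `F` to `ℤ/p`. -/
def Trq (p : ℕ) (F : Type) [Field F] [Algebra (ZMod p) F] (x : F) : ZMod p :=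
  Algebra.trace (ZMod p) F x

/-- The canonical additive character of `F`: `χ₁(x) = ζ_p^{Tr x}`. -/
def chiQ (p : ℕ) (F : Type) [Field F] [Algebra (ZMod p) F] (x : F) : ℂ :=
  chiBar p (Trq p F x)

/-- The quadratic Gauss sum `G` over `F`. -/
def GaussQ (p : ℕ) (F : Type) [Field F] [Fintype F] [Algebra (ZMod p) F] : ℂ :=
  ∑ x ∈ univ.filter (fun x : F => x ≠ 0), etaQ F x * chiQ p F x

/-- The quadratic Gauss sum `Ḡ` over `ℤ/p`. -/
def GaussP (p : ℕ) [NeZero p] : ℂ :=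
  ∑ y ∈ univ.filter (fun y : ZMod p => y ≠ 0), etaBar p y * chiBar p y

section QuadraticCharacter

lemma isSquare_pow_iff_of_odd {G : Type*} [CommGroupWithZero G] {n : ℕ} (hn : Odd n) {a : G} :
    IsSquare (a ^ n) ↔ IsSquare a := by
  refine ⟨fun h ↦ ?_, IsSquare.pow n⟩
  obtain rfl | ha := eq_or_ne a 0
  · exact IsSquare.zero
  obtain ⟨k, rfl⟩ := hn
  have h_div : a ^ (2 * k + 1) / a ^ (2 * k) = a := by
    rw [pow_succ, mul_div_cancel_left₀ _ (pow_ne_zero _ ha)]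
  exact h_div ▸ h.div ((even_two_mul k).isSquare_pow a)

lemma isSquare_algebraMap_iff_of_odd_finrank {K L : Type*} [Field K] [Field L] [Algebra K L]
    (hn : Odd (Module.finrank K L)) {x : K} : IsSquare (algebraMap K L x) ↔ IsSquare x := by
  refine ⟨fun h ↦ ?_, IsSquare.map _⟩
  -- The norm sends a square root of `x` in `L` to a square root of `x ^ [L : K]` in `K`.
  rw [← isSquare_pow_iff_of_odd hn, ← Algebra.norm_algebraMap]
  exact h.map (Algebra.norm K)

/-- The quadratic character of a finite field `F` with values in a commutative ring `R`; Mathlib's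
`quadraticChar` is integer-valued. -/
def quadraticCharOver (F R : Type*) [Field F] [Fintype F] [CommRing R] : MulChar F R :=
  (quadraticChar F).ringHomComp (Int.castRingHom R)

variable {F R : Type*} [Field F] [Fintype F] [CommRing R]

lemma quadraticCharOver_apply (x : F) :
    quadraticCharOver F R x = if x = 0 then 0 else if IsSquare x then 1 else -1 := by
  rw [quadraticCharOver, MulChar.ringHomComp_apply, quadraticChar_apply, quadraticCharFun]
  split_ifs <;> simp

lemma quadraticCharOver_isQuadratic : (quadraticCharOver F R).IsQuadratic :=
  (quadraticChar_isQuadratic F).comp _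

lemma sum_quadraticCharOver (hF : ringChar F ≠ 2) : ∑ x, quadraticCharOver F R x = 0 := by
  simp only [quadraticCharOver, MulChar.ringHomComp_apply, ← map_sum, quadraticChar_sum_zero hF,
    map_zero]

lemma quadraticCharOver_algebraMap_of_odd_finrank {L : Type*} [Field L] [Fintype L] [Algebra F L]
    (hn : Odd (Module.finrank F L)) (x : F) :
    quadraticCharOver L R (algebraMap F L x) = quadraticCharOver F R x := by
  simp only [quadraticCharOver_apply, map_eq_zero, isSquare_algebraMap_iff_of_odd_finrank hn]

lemma sum_comp_sq (hF : ringChar F ≠ 2) (f : F → R) :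
    ∑ x, f (x ^ 2) = ∑ t, (quadraticCharOver F R t + 1) * f t := by
  rw [← sum_fiberwise univ (fun x : F ↦ x ^ 2)]
  refine sum_congr rfl fun t _ ↦ ?_
  have h_card : (#{x : F | x ^ 2 = t} : R) = quadraticCharOver F R t + 1 := by
    have h := congrArg (Int.cast : ℤ → R) (quadraticChar_card_sqrts hF t)
    rw [Set.toFinset_ofPred] at h
    simpa [quadraticCharOver] using h
  rw [← h_card, ← nsmul_eq_mul]
  exact sum_eq_card_nsmul fun x hx ↦ congrArg f (mem_filter.1 hx).2

/-- The quadratic Gauss sum `∑ x, η x * ψ x` of an additive character `ψ` of a finite field. -/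
def quadraticGaussSum (ψ : AddChar F R) : R :=
  gaussSum (quadraticCharOver F R) ψ

lemma quadraticGaussSum_mulShift (hF : ringChar F ≠ 2) (ψ : AddChar F R) (a : F) :
    quadraticGaussSum (ψ.mulShift a) = quadraticCharOver F R a * quadraticGaussSum ψ := by
  obtain rfl | ha := eq_or_ne a 0
  · simp [quadraticGaussSum, gaussSum, sum_quadraticCharOver hF, MulChar.map_zero]
  · have h := gaussSum_mulShift_eq (quadraticCharOver F R) ψ (Units.mk0 a ha)
    rwa [quadraticCharOver_isQuadratic.inv] at h

lemma sum_addChar_sq (hF : ringChar F ≠ 2) (ψ : AddChar F R) :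
    ∑ x, ψ (x ^ 2) = quadraticGaussSum ψ + ∑ x, ψ x := by
  simp only [sum_comp_sq hF, add_mul, one_mul, sum_add_distrib, quadraticGaussSum, gaussSum]

lemma sum_addChar_mul_sq [IsDomain R] (hF : ringChar F ≠ 2) {ψ : AddChar F R}
    (hψ : ψ.IsPrimitive) (a : F) :
    ∑ x, ψ (a * x ^ 2) =
      quadraticCharOver F R a * quadraticGaussSum ψ +
        if a = 0 then (Fintype.card F : R) else 0 := by
  have h := sum_addChar_sq hF (ψ.mulShift a)
  simp only [quadraticGaussSum_mulShift hF, AddChar.mulShift_apply] at h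
  rw [h]
  simpa [mul_comm a] using AddChar.sum_mulShift a hψ

end QuadraticCharacter

section TraceOfSquares

lemma card_mul_card_fiber {ι A R : Type*} [Fintype ι] [CommRing A] [Fintype A] [DecidableEq A]
    [CommRing R] [IsDomain R] {ψ : AddChar A R} (hψ : ψ.IsPrimitive) (f : ι → A) (c : A) :
    (Fintype.card A : R) * #{i | f i = c} = ∑ y, ψ (-c * y) * ∑ i, ψ (y * f i) :=
  calc
    (Fintype.card A : R) * #{i | f i = c} = ∑ i, ∑ y, ψ (y * (f i - c)) := by
      simp [AddChar.sum_mulShift _ hψ, sub_eq_zero, ← sum_filter, mul_comm]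
    _ = ∑ y, ∑ i, ψ (y * (f i - c)) := sum_comm
    _ = ∑ y, ψ (-c * y) * ∑ i, ψ (y * f i) := by
      simp only [mul_sum, ← AddChar.map_add_eq_mul, mul_sub, neg_mul, mul_comm c, neg_add_eq_sub]

variable {K R : Type*} (L : Type*) [Field K] [Field L] [Algebra K L]

/-- The lift `x ↦ ψ (Tr x)` to `L` of an additive character `ψ` of `K`. -/
def traceChar [CommRing R] (ψ : AddChar K R) : AddChar L R :=
  ψ.compAddMonoidHom (Algebra.trace K L).toAddMonoidHom

lemma traceChar_apply [CommRing R] (ψ : AddChar K R) (x : L) :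
    traceChar L ψ x = ψ (Algebra.trace K L x) := rfl

lemma traceChar_algebraMap_mul [CommRing R] (ψ : AddChar K R) (y : K) (x : L) :
    traceChar L ψ (algebraMap K L y * x) = ψ (y * Algebra.trace K L x) := by
  rw [traceChar_apply, ← Algebra.smul_def, map_smul, smul_eq_mul]

lemma traceChar_isPrimitive [CommRing R] [FiniteDimensional K L] [Algebra.IsSeparable K L]
    {ψ : AddChar K R} (hψ : ψ ≠ 1) : (traceChar L ψ).IsPrimitive := by
  refine AddChar.IsPrimitive.of_ne_one fun h ↦ hψ ?_
  ext y
  obtain ⟨x, rfl⟩ := Algebra.trace_surjective K L y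
  exact DFunLike.congr_fun h x

variable [Fintype K] [Fintype L] [DecidableEq K]

lemma card_mul_card_trace_sq_eq [CommRing R] [IsDomain R] (hK : ringChar K ≠ 2)
    (hn : Odd (Module.finrank K L)) {ψ : AddChar K R} (hψ : ψ.IsPrimitive) (c : K) :
    (Fintype.card K : R) * #{a : L | Algebra.trace K L (a ^ 2) = c} =
      (Fintype.card K : R) ^ Module.finrank K L +
        quadraticCharOver K R (-c) * quadraticGaussSum (traceChar L ψ) * quadraticGaussSum ψ := by
  have hL : ringChar L ≠ 2 := Algebra.ringChar_eq K L ▸ hK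
  have hψL := traceChar_isPrimitive L (ψ.mulShift_one ▸ hψ one_ne_zero)
  set G := quadraticGaussSum (traceChar L ψ)
  have h_inner (y : K) : ∑ a : L, ψ (y * Algebra.trace K L (a ^ 2)) =
      quadraticCharOver K R y * G + if y = 0 then (Fintype.card L : R) else 0 := by
    simpa [traceChar_algebraMap_mul, quadraticCharOver_algebraMap_of_odd_finrank hn]
      using sum_addChar_mul_sq hL hψL (algebraMap K L y)
  have h_outer : ∑ y, quadraticCharOver K R y * ψ (-c * y) =
      quadraticCharOver K R (-c) * quadraticGaussSum ψ :=
    quadraticGaussSum_mulShift hK ψ (-c)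
  calc
    (Fintype.card K : R) * #{a : L | Algebra.trace K L (a ^ 2) = c}
      = ∑ y, ψ (-c * y) *
          (quadraticCharOver K R y * G + if y = 0 then (Fintype.card L : R) else 0) := by
        simp only [card_mul_card_fiber hψ, h_inner]
    _ = Fintype.card L + (∑ y, quadraticCharOver K R y * ψ (-c * y)) * G := by
        simp only [mul_add, sum_add_distrib, mul_ite, mul_zero, sum_ite_eq', mem_univ, if_true,
          AddChar.map_zero_eq_one, one_mul, sum_mul]
        rw [add_comm]
        simp only [mul_comm, mul_left_comm]
    _ = _ := by
        rw [h_outer, Module.card_eq_pow_finrank (K := K) (V := L), Nat.cast_pow]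
        ring

theorem N2_card_m_odd_general [Field R] (hK : ringChar K ≠ 2) (hR : (Fintype.card K : R) ≠ 0)
    (hn : Odd (Module.finrank K L)) {ψ : AddChar K R} (hψ : ψ.IsPrimitive) (c₁ c₂ : K) :
    (#{ab : L × L | Algebra.trace K L (ab.1 ^ 2) = c₁ ∧ Algebra.trace K L (ab.2 ^ 2) = c₂} : R) =
      (Fintype.card K : R) ^ (2 * (Module.finrank K L : ℤ) - 2) +
      (Fintype.card K : R) ^ ((Module.finrank K L : ℤ) - 2) *
        (quadraticCharOver K R (-c₁) + quadraticCharOver K R (-c₂)) *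
        quadraticGaussSum (traceChar L ψ) * quadraticGaussSum ψ +
      (Fintype.card K : R) ^ (-2 : ℤ) * quadraticCharOver K R (c₁ * c₂) *
        quadraticGaussSum (traceChar L ψ) ^ 2 * quadraticGaussSum ψ ^ 2 := by
  have h_prod :
      #{ab : L × L | Algebra.trace K L (ab.1 ^ 2) = c₁ ∧ Algebra.trace K L (ab.2 ^ 2) = c₂} =
        #{a : L | Algebra.trace K L (a ^ 2) = c₁} * #{b : L | Algebra.trace K L (b ^ 2) = c₂} := by
    rw [← card_product, ← filter_product, univ_product_univ]
  have h₁ := card_mul_card_trace_sq_eq L hK hn hψ c₁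
  have h₂ := card_mul_card_trace_sq_eq L hK hn hψ c₂
  rw [h_prod, Nat.cast_mul, eq_div_of_mul_eq hR ((mul_comm _ _).trans h₁),
    eq_div_of_mul_eq hR ((mul_comm _ _).trans h₂), ← neg_mul_neg c₁, map_mul, two_mul,
    zpow_sub₀ hR, zpow_sub₀ hR, zpow_add₀ hR, zpow_natCast, zpow_neg]
  field_simp
  ring

end TraceOfSquares

section PrimeField

variable (p : ℕ) [Fact p.Prime]

lemma chiBar_eq_stdAddChar (c : ZMod p) : chiBar p c = ZMod.stdAddChar c := by
  have h := ZMod.stdAddChar_coe (N := p) (c.val : ℤ)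
  rw [Int.cast_natCast, ZMod.natCast_zmod_val] at h
  rw [h, chiBar, zeta, ← Complex.exp_nat_mul]
  congr 1
  push_cast
  ring

lemma etaBar_eq_quadraticCharOver (c : ZMod p) :
    etaBar p c = quadraticCharOver (ZMod p) ℂ c := by
  rw [quadraticCharOver_apply, etaBar]
  congr

lemma etaQ_eq_quadraticCharOver (F : Type) [Field F] [Fintype F] (x : F) :
    etaQ F x = quadraticCharOver F ℂ x :=
by
  rw [quadraticCharOver_apply, etaQ]
  congr

lemma gaussP_eq_quadraticGaussSum :
    GaussP p = quadraticGaussSum (ZMod.stdAddChar : AddChar (ZMod p) ℂ) := by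
  simp only [GaussP, etaBar_eq_quadraticCharOver, chiBar_eq_stdAddChar]
  exact sum_filter_of_ne fun x _ hx ↦ by rintro rfl; simp [MulChar.map_zero] at hx

lemma gaussQ_eq_quadraticGaussSum (F : Type) [Field F] [Fintype F] [Algebra (ZMod p) F] :
    GaussQ p F = quadraticGaussSum (traceChar F (ZMod.stdAddChar : AddChar (ZMod p) ℂ)) := by
  simp only [GaussQ, chiQ, Trq, etaQ_eq_quadraticCharOver, chiBar_eq_stdAddChar]
  exact sum_filter_of_ne fun x _ hx ↦ by rintro rfl; simp [MulChar.map_zero] at hx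

variable {p}

lemma card_trq_sq_pair_eq {m : ℕ} (hp : Odd p) (F : Type) [Field F] [Fintype F]
    [Algebra (ZMod p) F] (hq : Fintype.card F = p ^ m) (hm : Odd m) (c₁ c₂ : ZMod p) :
    (#{ab : F × F | Trq p F (ab.1 ^ 2) = c₁ ∧ Trq p F (ab.2 ^ 2) = c₂} : ℂ) =
      (p : ℂ) ^ (2 * (m : ℤ) - 2) +
      (p : ℂ) ^ ((m : ℤ) - 2) * (etaBar p (-c₁) + etaBar p (-c₂)) * GaussQ p F * GaussP p +
      (p : ℂ) ^ (-2 : ℤ) * etaBar p (c₁ * c₂) * GaussQ p F ^ 2 * GaussP p ^ 2 := by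
  have h_prime : p.Prime := Fact.out
  have h_ringChar : ringChar (ZMod p) ≠ 2 := by
    rw [ZMod.ringChar_zmod_n]
    exact hp.ne_two_of_dvd_nat dvd_rfl
  have h_card_ne : (Fintype.card (ZMod p) : ℂ) ≠ 0 := by
    rw [ZMod.card]
    exact_mod_cast h_prime.ne_zero
  obtain rfl : Module.finrank (ZMod p) F = m := by
    rw [Module.card_eq_pow_finrank (K := ZMod p), ZMod.card] at hq
    exact Nat.pow_right_injective h_prime.two_le hq
  have h_card := N2_card_m_odd_general F h_ringChar h_card_ne hm
    (ZMod.isPrimitive_stdAddChar p) c₁ c₂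
  simp only [ZMod.card, ← gaussP_eq_quadraticGaussSum, ← gaussQ_eq_quadraticGaussSum,
    ← etaBar_eq_quadraticCharOver] at h_card
  exact h_card

end PrimeField

theorem N2_card_m_odd (p m : ℕ) [Fact (Nat.Prime p)] (hp : Odd p)
    (F : Type) [Field F] [Fintype F] [Algebra (ZMod p) F]
    (hm : 0 < m) (hq : Fintype.card F = p ^ m)
    (hmodd : Odd m) (c₁ c₂ : ZMod p) :
    (c₁ = 0 ∧ c₂ = 0 →
      (((univ.filter (fun ab : F × F =>
      Trq p F (ab.1 ^ 2) = c₁ ∧ Trq p F (ab.2 ^ 2) = c₂)).card : ℕ) : ℂ) = (p : ℂ) ^ (2 * (m : ℤ) - 2 : ℤ)) ∧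
    (c₁ ≠ 0 ∧ c₂ = 0 →
      (((univ.filter (fun ab : F × F =>
      Trq p F (ab.1 ^ 2) = c₁ ∧ Trq p F (ab.2 ^ 2) = c₂)).card : ℕ) : ℂ) = (p : ℂ) ^ (2 * (m : ℤ) - 2 : ℤ) + (p : ℂ) ^ ((m : ℤ) - 2 : ℤ) * etaBar p (-c₁) * GaussQ p F * GaussP p) ∧
    (c₁ = 0 ∧ c₂ ≠ 0 →
      (((univ.filter (fun ab : F × F =>
      Trq p F (ab.1 ^ 2) = c₁ ∧ Trq p F (ab.2 ^ 2) = c₂)).card : ℕ) : ℂ) = (p : ℂ) ^ (2 * (m : ℤ) - 2 : ℤ) + (p : ℂ) ^ ((m : ℤ) - 2 : ℤ) * etaBar p (-c₂) * GaussQ p F * GaussP p) ∧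
    (c₁ ≠ 0 ∧ c₂ ≠ 0 →
      (((univ.filter (fun ab : F × F =>
      Trq p F (ab.1 ^ 2) = c₁ ∧ Trq p F (ab.2 ^ 2) = c₂)).card : ℕ) : ℂ) = (p : ℂ) ^ (2 * (m : ℤ) - 2 : ℤ) + (p : ℂ) ^ ((m : ℤ) - 2 : ℤ) * (etaBar p (-c₁) + etaBar p (-c₂)) * GaussQ p F * GaussP p + (p : ℂ) ^ (-2 : ℤ) * etaBar p (c₁ * c₂) * (GaussQ p F) ^ 2 * (GaussP p) ^ 2) := by
  have etaBar_zero : etaBar p 0 = 0 := if_pos rfl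
  rw [card_trq_sq_pair_eq hp F hq hmodd]
  refine ⟨?_, ?_, ?_, fun _ ↦ rfl⟩ <;> rintro ⟨h₁, h₂⟩ <;> simp [h₁, h₂, etaBar_zero]
end
end

section
/- For j ∈ {1, −1}, let L_j be the number of triples (c₁,c₂,c₃) ∈ 𝔽_p^* × 𝔽_p^* × 𝔽_p^* such that η̄(c₃² − c₁c₂) = j. Then L₁ = (p−1)²(p−3)/2 and L₋₁ = (p−1)³/2. -/
open Finset
open scoped Classical

noncomputable section

/-! Fix `c₁, c₃ ≠ 0` in a field with `q` elements. As `c₂` runs over the nonzero elements,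
`c₃² - c₁ c₂` runs once over every element except `c₃²`. The quadratic character takes each of the
values `±1` exactly `(q - 1) / 2` times, and the omitted element is a nonzero square, so the value
`1` is lost once and `-1` never: the value `j = ±1` is attained for `(q - 2 - j) / 2`
choices of `c₂`. -/

lemma card_filter_product_eq_sum_card_middle {α β γ : Type*} (s : Finset α) (t : Finset β)
    (u : Finset γ) (r : α → β → γ → Prop) [∀ a b c, Decidable (r a b c)] :
    #{x ∈ s ×ˢ t ×ˢ u | r x.1 x.2.1 x.2.2} = ∑ a ∈ s, ∑ c ∈ u, #{b ∈ t | r a b c} := by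
  simp only [card_filter, sum_product]
  exact sum_congr rfl fun a _ => sum_comm

lemma card_filter_ne_zero_sub_mul {F : Type*} [DivisionRing F] [Fintype F] [DecidableEq F]
    {a : F} (ha : a ≠ 0) (d : F) (r : F → Prop) [DecidablePred r] :
    #{b | b ≠ 0 ∧ r (d - a * b)} = #{y | y ≠ d ∧ r y} :=
  card_equiv ((Equiv.mulLeft₀ a ha).trans (Equiv.subLeft d)) (by simp [ha])

section QuadraticChar

variable {F : Type*} [Field F] [Fintype F] [DecidableEq F]

lemma two_mul_card_quadraticChar_eq (hF : ringChar F ≠ 2) (j : ℤˣ) :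
    2 * (#{y | quadraticChar F y = j} : ℤ) = Fintype.card F - 1 := by
  have indicator_eq (y : F) : 2 * (if quadraticChar F y = j then 1 else 0 : ℤ) =
      (if y = 0 then 0 else 1) + j * quadraticChar F y := by
    rcases eq_or_ne y 0 with rfl | hy
    · simp [j.ne_zero.symm]
    · rcases quadraticChar_dichotomy hy with h | h <;>
        rcases Int.units_eq_one_or j with rfl | rfl <;> simp [h, hy]
  calc 2 * (#{y | quadraticChar F y = j} : ℤ)
      = ∑ y : F, ((if y = 0 then 0 else 1) + j * quadraticChar F y) := by
        simp only [← indicator_eq, ← mul_sum, sum_boole]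
    _ = ∑ y : F, (if y = 0 then 0 else 1) := by
        rw [sum_add_distrib, ← mul_sum, quadraticChar_sum_zero hF, mul_zero, add_zero]
    _ = Fintype.card F - 1 := by
        simp [sum_ite, filter_ne', Nat.cast_sub Fintype.card_pos]

lemma two_mul_card_ne_zero_quadraticChar_sq_sub_mul_eq (hF : ringChar F ≠ 2) {a c : F} (ha : a ≠ 0)
    (hc : c ≠ 0) (j : ℤˣ) :
    2 * (#{b | b ≠ 0 ∧ quadraticChar F (c ^ 2 - a * b) = j} : ℤ) = Fintype.card F - 2 - j := by
  have card_eq := two_mul_card_quadraticChar_eq hF j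
  have char_sq : quadraticChar F (c ^ 2) = 1 := quadraticChar_sq_one' hc
  rw [card_filter_ne_zero_sub_mul ha (c ^ 2) (quadraticChar F · = j)]
  rcases Int.units_eq_one_or j with rfl | rfl
  · have filter_eq : ({y | y ≠ c ^ 2 ∧ quadraticChar F y = (1 : ℤˣ)} : Finset F) =
        ({y | quadraticChar F y = (1 : ℤˣ)} : Finset F).erase (c ^ 2) := by ext; simp
    rw [filter_eq, cast_card_erase_of_mem ((mem_filter_univ (c ^ 2)).2 char_sq), mul_sub, card_eq,
      Units.val_one]
    ring
  · have filter_eq : ({y | y ≠ c ^ 2 ∧ quadraticChar F y = (-1 : ℤˣ)} : Finset F) =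
        ({y | quadraticChar F y = (-1 : ℤˣ)} : Finset F) :=
      filter_congr fun y _ => and_iff_right_of_imp (by rintro h rfl; simp [h] at char_sq)
    rw [filter_eq, card_eq, Units.val_neg, Units.val_one]
    ring

lemma two_mul_card_triple_quadraticChar_sq_sub_mul_eq (hF : ringChar F ≠ 2) (j : ℤˣ) :
    2 * (#{c : F × F × F | c.1 ≠ 0 ∧ c.2.1 ≠ 0 ∧ c.2.2 ≠ 0 ∧
        quadraticChar F (c.2.2 ^ 2 - c.1 * c.2.1) = j} : ℤ) =
      (Fintype.card F - 1) ^ 2 * (Fintype.card F - 2 - j) := by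
  set s : Finset F := {a | a ≠ 0}
  have card_s : (#s : ℤ) = Fintype.card F - 1 := by
    simp only [s, filter_ne', cast_card_erase_of_mem (mem_univ (0 : F)), card_univ]
  have filter_eq : ({c : F × F × F | c.1 ≠ 0 ∧ c.2.1 ≠ 0 ∧ c.2.2 ≠ 0 ∧
        quadraticChar F (c.2.2 ^ 2 - c.1 * c.2.1) = j} : Finset (F × F × F)) =
      {c ∈ s ×ˢ s ×ˢ s | quadraticChar F (c.2.2 ^ 2 - c.1 * c.2.1) = j} := by
    ext; simp [s, and_assoc]
  have card_middle {a c : F} (ha : a ∈ s) (hc : c ∈ s) :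
      2 * (#{b ∈ s | quadraticChar F (c ^ 2 - a * b) = j} : ℤ) = Fintype.card F - 2 - j := by
    rw [filter_filter]
    exact two_mul_card_ne_zero_quadraticChar_sq_sub_mul_eq hF (mem_filter.1 ha).2
      (mem_filter.1 hc).2 j
  calc 2 * (#{c : F × F × F | c.1 ≠ 0 ∧ c.2.1 ≠ 0 ∧ c.2.2 ≠ 0 ∧
        quadraticChar F (c.2.2 ^ 2 - c.1 * c.2.1) = j} : ℤ)
      = ∑ a ∈ s, ∑ c ∈ s, 2 * (#{b ∈ s | quadraticChar F (c ^ 2 - a * b) = j} : ℤ) := by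
        rw [filter_eq, card_filter_product_eq_sum_card_middle s s s
          (fun a b c => quadraticChar F (c ^ 2 - a * b) = j)]
        simp only [Nat.cast_sum, mul_sum]
    _ = ∑ a ∈ s, ∑ c ∈ s, ((Fintype.card F : ℤ) - 2 - j) :=
        sum_congr rfl fun a ha => sum_congr rfl fun c hc => card_middle ha hc
    _ = (Fintype.card F - 1) ^ 2 * (Fintype.card F - 2 - j) := by
        rw [sum_const, sum_const, smul_smul, nsmul_eq_mul, Nat.cast_mul, card_s, sq]

end QuadraticChar

section EtaQ

variable {F : Type} [Field F] [Fintype F] [DecidableEq F]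

lemma etaQ_eq_quadraticChar (x : F) : etaQ F x = (quadraticChar F x : ℤ) := by
  rw [etaQ, quadraticChar_apply, quadraticCharFun]
  split_ifs <;> simp

lemma etaQ_eq_intUnits_iff (x : F) (j : ℤˣ) : etaQ F x = (j : ℤ) ↔ quadraticChar F x = j := by
  rw [etaQ_eq_quadraticChar, Int.cast_inj]

theorem cyclotomic_triple_count_general (hF : ringChar F ≠ 2) :
    (#{c : F × F × F | c.1 ≠ 0 ∧ c.2.1 ≠ 0 ∧ c.2.2 ≠ 0 ∧
        etaQ F (c.2.2 ^ 2 - c.1 * c.2.1) = 1} : ℂ) =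
      ((Fintype.card F : ℂ) - 1) ^ 2 * ((Fintype.card F : ℂ) - 3) / 2 ∧
    (#{c : F × F × F | c.1 ≠ 0 ∧ c.2.1 ≠ 0 ∧ c.2.2 ≠ 0 ∧
        etaQ F (c.2.2 ^ 2 - c.1 * c.2.1) = -1} : ℂ) =
      ((Fintype.card F : ℂ) - 1) ^ 3 / 2 := by
  have count (j : ℤˣ) :=
    congrArg (Int.cast : ℤ → ℂ) (two_mul_card_triple_quadraticChar_sq_sub_mul_eq hF j)
  simp only [← etaQ_eq_intUnits_iff] at count
  have count_one := count 1
  have count_neg_one := count (-1)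
  push_cast at count_one count_neg_one
  exact ⟨by linear_combination count_one / 2, by linear_combination count_neg_one / 2⟩

end EtaQ

lemma etaBar_eq_etaQ (p : ℕ) [Fact p.Prime] : etaBar p = etaQ (ZMod p) := by
  ext c
  rw [etaBar, etaQ]
  congr

theorem cyclotomic_triple_count (p : ℕ) [Fact (Nat.Prime p)] (hp : Odd p) :
    (((univ.filter (fun c : ZMod p × ZMod p × ZMod p =>
      c.1 ≠ 0 ∧ c.2.1 ≠ 0 ∧ c.2.2 ≠ 0 ∧
        etaBar p (c.2.2 ^ 2 - c.1 * c.2.1) = 1)).card : ℕ) : ℂ) = (((p : ℂ) - 1) ^ 2 * ((p : ℂ) - 3)) / 2 ∧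
    (((univ.filter (fun c : ZMod p × ZMod p × ZMod p =>
      c.1 ≠ 0 ∧ c.2.1 ≠ 0 ∧ c.2.2 ≠ 0 ∧
        etaBar p (c.2.2 ^ 2 - c.1 * c.2.1) = -1)).card : ℕ) : ℂ) = (((p : ℂ) - 1) ^ 3) / 2 := by
  have hF : ringChar (ZMod p) ≠ 2 := by
    simpa only [ZMod.ringChar_zmod_n] using hp.ne_two_of_dvd_nat dvd_rfl
  simpa only [etaBar_eq_etaQ, ZMod.card] using cyclotomic_triple_count_general hF
end
end
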